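/- Let α ∈ (0,1) be irrational. For every integer n ≥ 2, letting N = ord(n−1), one has n·D_n*(α) = sup_{β∈(0,1)} |d_n(α, β)| ≤ 1 + 3N + (1/4) Σ_{m=1}^{N+1} a_m. -/

import Mathlib

open Filter Finset

noncomputable section

/-- The Gauss map `G(x) = {1/x}` (with `G(0) = 0`, since `0⁻¹ = 0` in Lean). -/
def gaussMap (x : ℝ) : ℝ := Int.fract x⁻¹

/-- `α_m = G^m(α)`. -/
def gaussIter (α : ℝ) (m : ℕ) : ℝ := gaussMap^[m] α

/-- The `h`-th partial quotient `a_h` of `α` (meaningful for `h ≥ 1`):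
`a_h = ⌊(G^{h-1} α)⁻¹⌋`. -/
def pq (α : ℝ) (h : ℕ) : ℕ := ⌊(gaussIter α (h - 1))⁻¹⌋₊

/-- Denominators `q_n` of the convergents of `α`:
`q_0 = 1`, `q_1 = a_1`, `q_{n+2} = a_{n+2} q_{n+1} + q_n`. -/
def qden (α : ℝ) : ℕ → ℕ
  | 0 => 1
  | 1 => pq α 1
  | (n + 2) => pq α (n + 2) * qden α (n + 1) + qden α n

/-- Numerators `p_n` of the convergents of `α`:
`p_0 = 0`, `p_1 = 1`, `p_{n+2} = a_{n+2} p_{n+1} + p_n`. -/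
def pnum (α : ℝ) : ℕ → ℕ
  | 0 => 0
  | 1 => 1
  | (n + 2) => pq α (n + 2) * pnum α (n + 1) + pnum α n

/-- `f_n = (-1)^n (q_n α - p_n)`. -/
def fseq (α : ℝ) (n : ℕ) : ℝ := (-1) ^ n * ((qden α n : ℝ) * α - (pnum α n : ℝ))

/-- `r_k = min {r ≥ 0 : ⌊r α⌋ = k}`. -/
def rmin (α : ℝ) (k : ℕ) : ℕ := sInf {r : ℕ | ⌊(r : ℝ) * α⌋ = (k : ℤ)}

/-- `t_k = #{r ≥ 0 : ⌊r α⌋ = k}`. -/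
def tcount (α : ℝ) (k : ℕ) : ℕ := Set.ncard {r : ℕ | ⌊(r : ℝ) * α⌋ = (k : ℤ)}

/-- `(k_j)_{j ≥ 0}`: the increasing enumeration of `{k : t_k = a_1 + 1}`. -/
def kseq (α : ℝ) (j : ℕ) : ℕ := Nat.nth (fun k => tcount α k = pq α 1 + 1) j

/-- The gaps `g_j = r_{k_j} - r_{k_{j-1}}` (for `j ≥ 1`). -/
def gseq (γ : ℝ) (j : ℕ) : ℕ := rmin γ (kseq γ j) - rmin γ (kseq γ (j - 1))

/-- `(j_h)_{h ≥ 0}`: the increasing enumeration of those `j ≥ 1` with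
`g_j = q_2 + q_1`. -/
def jbig (γ : ℝ) (h : ℕ) : ℕ :=
  Nat.nth (fun j => 1 ≤ j ∧ gseq γ j = qden γ 2 + qden γ 1) h

/-- `ᾱ_1 = G(α)/(1 - G(α))`. -/
def abar (α : ℝ) : ℝ := gaussIter α 1 / (1 - gaussIter α 1)

/-- The Ostrowski representation `r = ∑_{h=0}^N c_h q_h` with `0 ≤ c_h ≤ a_{h+1}`,
`c_{h-1} = 0` whenever `c_h = a_{h+1}`, and `c_N > 0`; `N = ord r`. -/
def IsOstrowski (α : ℝ) (r N : ℕ) (c : ℕ → ℕ) : Prop :=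
  r = ∑ h ∈ Finset.range (N + 1), c h * qden α h ∧
  (∀ h, c h ≤ pq α (h + 1)) ∧
  (∀ h, c (h + 1) = pq α (h + 2) → c h = 0) ∧
  0 < c N ∧ ∀ h, N < h → c h = 0

/-- The order `ord r` of a positive integer `r`. -/
def ordOst (α : ℝ) (r : ℕ) : ℕ := sInf {N | ∃ c, IsOstrowski α r N c}

/-- `s(y) = 2 χ_{[0,1/2)}({y}) - 1`. -/
def sfun (y : ℝ) : ℝ := if Int.fract y < 1 / 2 then 1 else -1

/-- `S_n(α, β) = ∑_{r=0}^n s({r α + β})`. -/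
def Sgen (α β : ℝ) (n : ℕ) : ℝ := ∑ r ∈ Finset.range (n + 1), sfun ((r : ℝ) * α + β)

/-- `S_n(α) = S_n(α, 0)`. -/
def Ssum (α : ℝ) (n : ℕ) : ℝ := Sgen α 0 n

/-- `max_{0 ≤ n ≤ r} S_n(α)`. -/
def maxS (α : ℝ) (r : ℕ) : ℝ := sSup (Ssum α '' Set.Iic r)

/-- `min_{0 ≤ n ≤ r} S_n(α)`. -/
def minS (α : ℝ) (r : ℕ) : ℝ := sInf (Ssum α '' Set.Iic r)

/-- `d_n(α, β) = ∑_{r=0}^{n-1} χ_{[0,β)}({r α}) - β n`. -/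
def ddisc (α β : ℝ) (n : ℕ) : ℝ :=
  (∑ r ∈ Finset.range n, if Int.fract ((r : ℝ) * α) < β then (1 : ℝ) else 0) - β * n

/-- `j(r) = max {j + sgn R₁ - 1, 0}` from the decomposition `r = r_{k_j} + R₁ q₁ + R₀`. -/
def jfun (j R1 : ℕ) : ℕ := if R1 = 0 then j - 1 else j

/-- `i(r) = k_j - j + max {R₁ - 1, 0}` from the decomposition `r = r_{k_j} + R₁ q₁ + R₀`. -/
def ifun (α : ℝ) (j R1 : ℕ) : ℕ := kseq α j - j + (R1 - 1)

/-- `S̃(r)` from the decomposition `r = r_{k_j} + R₁ q₁ + R₀`. -/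
def Stil (α : ℝ) (r R1 R0 : ℕ) : ℝ :=
  if R0 = 0 then (if R1 = 0 then sfun ((r : ℝ) * α) else 0)
  else if R1 = 0 then ∑ i ∈ Finset.Icc (r - R0) r, sfun ((i : ℝ) * α)
  else ∑ i ∈ Finset.Icc (r - R0 + 1) r, sfun ((i : ℝ) * α)

/-- `sup_{β ∈ (0,1)} |d_n(α, β)| = n D_n^*(α)`. -/
def nDsup (α : ℝ) (n : ℕ) : ℝ := sSup ((fun β => |ddisc α β n|) '' Set.Ioo (0 : ℝ) 1)

/-- The discrepancy `D_n^*(α) = sup_{β ∈ (0,1)} |d_n(α, β)| / n`. -/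
def Dstar (α : ℝ) (n : ℕ) : ℝ :=
  sSup ((fun β => |ddisc α β n| / (n : ℝ)) '' Set.Ioo (0 : ℝ) 1)

/-- `W(z) = ∑_{j<b} {z + jκ}`. -/
def Wsum (κ : ℝ) (b : ℕ) (z : ℝ) : ℝ := ∑ j ∈ Finset.range b, Int.fract (z + j * κ)

theorem Wsum_eq_count (κ : ℝ) (hκ : 0 < κ) (b : ℕ) (hbκ : ((b : ℝ) - 1) * κ < 1)
    (w : ℝ) (hw0 : 0 < w) (hw1 : w ≤ 1) :
    Wsum κ b (-w) - ∑ j ∈ Finset.range b, (j : ℝ) * κ = (min b ⌈w / κ⌉₊ : ℕ) - b * w := by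
  have key : ∀ j ∈ Finset.range b, Int.fract (-w + j * κ) =
      j * κ - w + (if j < ⌈w / κ⌉₊ then (1 : ℝ) else 0) := by
    intro j hj
    have hj' : (j : ℝ) ≤ b - 1 := by
      have : j + 1 ≤ b := Finset.mem_range.mp hj
      have : (j : ℝ) + 1 ≤ b := by exact_mod_cast this
      linarith
    have h2 : (j : ℝ) * κ < 1 := lt_of_le_of_lt (mul_le_mul_of_nonneg_right hj' hκ.le) hbκ
    have h3 : 0 ≤ (j : ℝ) * κ := by positivity
    have h4 : j < ⌈w / κ⌉₊ ↔ (j : ℝ) * κ < w := by rw [Nat.lt_ceil, lt_div_iff₀ hκ]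
    split_ifs with h
    · rw [h4] at h
      rw [Int.fract_eq_iff]
      refine ⟨by linarith, by linarith, -1, by push_cast; ring⟩
    · rw [h4] at h
      rw [Int.fract_eq_iff]
      refine ⟨by linarith, by linarith, 0, by push_cast; ring⟩
  unfold Wsum
  rw [Finset.sum_congr rfl key, Finset.sum_add_distrib, Finset.sum_sub_distrib]
  have : ∑ j ∈ Finset.range b, (if j < ⌈w / κ⌉₊ then (1 : ℝ) else 0) = (min b ⌈w / κ⌉₊ : ℕ) := by
    rw [Finset.sum_boole]
    congr 1
    have : Finset.filter (fun j => j < ⌈w / κ⌉₊) (Finset.range b) = Finset.range (min b ⌈w / κ⌉₊) := by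
      ext j; simp
    rw [this, Finset.card_range]
  rw [this]
  simp
  ring

theorem Wsum_bounds (κ : ℝ) (hκ : 0 < κ) (b : ℕ) (hb : 1 ≤ b) (hbκ : ((b : ℝ) - 1) * κ < 1)
    (w : ℝ) (hw0 : 0 < w) (hw1 : w ≤ 1) :
    min 0 (1 / κ - b) ≤ Wsum κ b (-w) - ∑ j ∈ Finset.range b, (j : ℝ) * κ ∧
    Wsum κ b (-w) - ∑ j ∈ Finset.range b, (j : ℝ) * κ ≤ max 1 (b * (1 - κ * (b - 1))) := by
  rw [Wsum_eq_count κ hκ b hbκ w hw0 hw1]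
  have hb' : (1 : ℝ) ≤ b := by exact_mod_cast hb
  have hpos : 0 < w / κ := by positivity
  set k := ⌈w / κ⌉₊ with hk
  have hk1 : w / κ ≤ k := Nat.le_ceil _
  have hk2 : (k : ℝ) < w / κ + 1 := Nat.ceil_lt_add_one hpos.le
  have hk3 : 1 ≤ k := Nat.one_le_ceil_iff.mpr hpos
  have hk3' : (1 : ℝ) ≤ k := by exact_mod_cast hk3
  have hw : (k - 1 : ℝ) * κ < w := by
    rw [← lt_div_iff₀ hκ]; linarith
  rcases le_total b k with h | h
  · rw [min_eq_left h]
    have h' : (b : ℝ) ≤ k := by exact_mod_cast h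
    have : (b - 1 : ℝ) * κ ≤ (k - 1) * κ := by nlinarith
    constructor
    · apply le_trans (min_le_left _ _); nlinarith
    · apply le_trans _ (le_max_right _ _); nlinarith
  · rw [min_eq_right h]
    have h' : (k : ℝ) ≤ b := by exact_mod_cast h
    constructor
    · have h5 : w * (1 / κ - b) ≤ k - b * w := by
        have : w * (1 / κ) = w / κ := by ring
        nlinarith
      refine le_trans ?_ h5
      rcases le_total 0 (1 / κ - b) with h6 | h6
      · exact le_trans (min_le_left _ _) (by positivity)
      · exact le_trans (min_le_right _ _) (by nlinarith)
    · have h5 : (k : ℝ) - b * w ≤ 1 + (k - 1) * (1 - b * κ) := by nlinarith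
      refine le_trans h5 ?_
      rcases le_total 0 (1 - b * κ) with h6 | h6
      · refine le_trans ?_ (le_max_right _ _)
        nlinarith
      · refine le_trans ?_ (le_max_left _ _)
        nlinarith

theorem Wsum_osc (κ : ℝ) (hκ : 0 < κ) (b : ℕ) (hb : 1 ≤ b) (hbκ : ((b : ℝ) - 1) * κ < 1)
    (z z' : ℝ) :
    Wsum κ b z - Wsum κ b z' ≤ max 1 (b * (1 - κ * (b - 1))) - min 0 (1 / κ - b) := by
  have hper : ∀ z, Wsum κ b z = Wsum κ b (-(1 - Int.fract z)) := by
    intro z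
    unfold Wsum
    apply Finset.sum_congr rfl
    intro j _
    have : z + j * κ = -(1 - Int.fract z) + j * κ + ((⌊z⌋ + 1 : ℤ) : ℝ) := by
      push_cast
      have := Int.floor_add_fract z
      linarith
    rw [this, Int.fract_add_intCast]
  rw [hper z, hper z']
  have h1 := (Wsum_bounds κ hκ b hb hbκ (1 - Int.fract z) (by linarith [Int.fract_lt_one z])
    (by linarith [Int.fract_nonneg z])).2
  have h2 := (Wsum_bounds κ hκ b hb hbκ (1 - Int.fract z') (by linarith [Int.fract_lt_one z'])
    (by linarith [Int.fract_nonneg z'])).1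
  linarith

theorem Wsum_osc_neg (κ : ℝ) (b : ℕ) (B : ℝ)
    (H : ∀ z z', Wsum κ b z - Wsum κ b z' ≤ B) (z z' : ℝ) :
    Wsum (-κ) b z - Wsum (-κ) b z' ≤ B := by
  have hrefl : ∀ z, Wsum (-κ) b z = Wsum κ b (z - (b - 1) * κ) := by
    intro z
    unfold Wsum
    rw [← Finset.sum_range_reflect]
    apply Finset.sum_congr rfl
    intro j hj
    have hj : j < b := Finset.mem_range.mp hj
    have : ((b - 1 - j : ℕ) : ℝ) = b - 1 - j := by
      rw [Nat.cast_sub (by omega), Nat.cast_sub (by omega)]; simp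
    rw [this]
    congr 1
    ring
  rw [hrefl, hrefl]
  exact H _ _

theorem floor_sum (p q : ℕ) (hq : 0 < q) (hcop : Nat.Coprime p q) (y : ℝ) :
    ∑ s ∈ Finset.range q, ((⌊y + s * (p : ℝ) / q⌋ : ℤ) : ℝ) =
      ⌊q * y⌋ + ((p : ℝ) - 1) / q * ∑ s ∈ Finset.range q, (s : ℝ) := by
  have hq' : (0 : ℝ) < q := by exact_mod_cast hq
  have hqz : (0 : ℤ) < q := by exact_mod_cast hq
  set m := ⌊q * y⌋ with hm
  have h1 : ∀ s : ℕ, ⌊y + s * (p : ℝ) / q⌋ = (m + s * p) / (q : ℤ) := by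
    intro s
    have : y + s * (p : ℝ) / q = (q * y + ((s * p : ℤ) : ℝ)) / (q : ℕ) := by
      push_cast; field_simp
    rw [this, Int.floor_div_natCast, Int.floor_add_intCast]
  have h2 : ∑ s ∈ Finset.range q, (((m + s * p) % (q : ℤ)).toNat : ℕ) = ∑ s ∈ Finset.range q, s := by
    have hmaps : Set.MapsTo (fun s : ℕ => ((m + s * p) % (q : ℤ)).toNat) (Finset.range q) (Finset.range q) := by
      intro s _
      simp only [Finset.coe_range, Set.mem_Iio]
      have := Int.emod_lt_of_pos (m + s * p) hqz
      omega
    have hinj : Set.InjOn (fun s : ℕ => ((m + s * p) % (q : ℤ)).toNat) (Finset.range q) := by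
      intro s hs t ht hst
      simp only [Finset.coe_range, Set.mem_Iio] at hs ht hst
      have e1 := Int.emod_nonneg (m + s * p) hqz.ne'
      have e2 := Int.emod_nonneg (m + t * p) hqz.ne'
      have e3 : (m + s * p) % (q : ℤ) = (m + t * p) % (q : ℤ) := by omega
      have e4 : ((s * p : ℕ) : ℤ) ≡ ((t * p : ℕ) : ℤ) [ZMOD q] := by
        have : m + s * p ≡ m + t * p [ZMOD q] := e3
        push_cast
        exact Int.ModEq.add_left_cancel' m this
      rw [Int.natCast_modEq_iff] at e4
      have e5 : s ≡ t [MOD q] := Nat.ModEq.cancel_right_of_coprime (by rwa [Nat.coprime_comm] at hcop) e4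
      exact Nat.ModEq.eq_of_lt_of_lt e5 hs ht
    exact Finset.sum_nbij (fun s : ℕ => ((m + s * p) % (q : ℤ)).toNat) hmaps hinj
      (Finset.surjOn_of_injOn_of_card_le _ hmaps hinj le_rfl) (fun _ _ => rfl)
  have h3 : ∀ s : ℕ, ((⌊y + s * (p : ℝ) / q⌋ : ℤ) : ℝ) =
      (m + s * p - (((m + s * p) % (q : ℤ)).toNat : ℝ)) / q := by
    intro s
    rw [h1, eq_div_iff hq'.ne']
    have e1 := Int.emod_nonneg (m + s * p) hqz.ne'
    have e2 := Int.emod_add_mul_ediv (m + s * p) q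
    have e3 : ((((m + s * p) % (q : ℤ)).toNat : ℤ)) = (m + s * p) % (q : ℤ) := Int.toNat_of_nonneg e1
    have e4 : (m + s * p) / (q : ℤ) * q = m + s * p - (((m + s * p) % (q : ℤ)).toNat : ℤ) := by
      rw [e3]; linarith
    exact_mod_cast e4
  rw [Finset.sum_congr rfl (fun s _ => h3 s), ← Finset.sum_div, Finset.sum_sub_distrib,
    Finset.sum_add_distrib, ← Finset.sum_mul]
  have h2' : ∑ s ∈ Finset.range q, (((m + s * p) % (q : ℤ)).toNat : ℝ) = ∑ s ∈ Finset.range q, (s : ℝ) := by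
    rw [← Nat.cast_sum, h2, Nat.cast_sum]
  rw [h2']
  simp
  field_simp
  ring

/-- `∑_{r<m} {x + rα}`. -/
def Fsum (α : ℝ) (m : ℕ) (x : ℝ) : ℝ := ∑ r ∈ Finset.range m, Int.fract (x + r * α)

theorem sum_range_mul' (f : ℕ → ℝ) (b q : ℕ) :
    ∑ r ∈ Finset.range (b * q), f r =
      ∑ j ∈ Finset.range b, ∑ s ∈ Finset.range q, f (j * q + s) := by
  induction b with
  | zero => simp
  | succ b ih => rw [Nat.succ_mul, Finset.sum_range_add, ih, Finset.sum_range_succ]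

theorem Fsum_block (α : ℝ) (p q : ℕ) (hq : 0 < q) (hcop : Nat.Coprime p q) (b : ℕ)
    (hb : (b : ℝ) * (q * |q * α - p|) ≤ 1) (x y : ℝ) :
    Fsum α (b * q) x - Fsum α (b * q) y ≤
      Wsum (q * (q * α - p)) b (q * x) - Wsum (q * (q * α - p)) b (q * y) + 1 := by
  have hq' : (0 : ℝ) < q := by exact_mod_cast hq
  set η := q * α - p with hη
  set κ := q * η with hκ
  set K : ℝ := ((p : ℝ) - 1) / q * ∑ s ∈ Finset.range q, (s : ℝ) with hK
  have hα : ∀ s : ℕ, s * α = s * (p : ℝ) / q + s / q * η := by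
    intro s; rw [hη]; field_simp; ring
  -- floor sums
  let Φ : ℝ → ℝ := fun x => ∑ j ∈ Finset.range b, (∑ s ∈ Finset.range q,
    ((⌊x + j * η + s * α⌋ : ℤ) : ℝ) - K - ⌊q * x + j * κ⌋)
  have hF : ∀ x, Fsum α (b * q) x - Wsum κ b (q * x) =
      (∑ j ∈ Finset.range b, (∑ s ∈ Finset.range q, (j * η + s * α) - K - j * κ)) - Φ x := by
    intro x
    unfold Fsum Wsum
    simp only [Φ]
    rw [sum_range_mul', ← Finset.sum_sub_distrib, ← Finset.sum_sub_distrib]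
    apply Finset.sum_congr rfl
    intro j _
    have e1 : ∀ s ∈ Finset.range q, Int.fract (x + ((j * q + s : ℕ) : ℝ) * α) =
        x + (j * η + s * α) - ((⌊x + j * η + s * α⌋ : ℤ) : ℝ) := by
      intro s _
      have : x + ((j * q + s : ℕ) : ℝ) * α = x + j * η + s * α + ((j * p : ℤ) : ℝ) := by
        rw [hη]; push_cast; ring
      rw [this, Int.fract_add_intCast]
      have := Int.floor_add_fract (x + j * η + s * α)
      linarith
    rw [Finset.sum_congr rfl e1, Finset.sum_sub_distrib, Finset.sum_add_distrib]
    have := Int.floor_add_fract (q * x + j * κ)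
    have e2 : ∑ s ∈ Finset.range q, x = q * x := by simp
    rw [e2]
    linarith
  have hsum : ∀ x (j : ℕ), ∑ s ∈ Finset.range q, ((⌊x + j * η + s * (p : ℝ) / q⌋ : ℤ) : ℝ) =
      ⌊q * x + j * κ⌋ + K := by
    intro x j
    rw [floor_sum p q hq hcop]
    congr 3
    rw [hκ]; ring_nf
  have htel : ∀ x, ∑ j ∈ Finset.range b,
      (((⌊q * x + (j + 1 : ℕ) * κ⌋ : ℤ) : ℝ) - ((⌊q * x + j * κ⌋ : ℤ) : ℝ)) =
      ((⌊q * x + b * κ⌋ - ⌊q * x⌋ : ℤ) : ℝ) := by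
    intro x
    rw [Finset.sum_range_sub (fun j : ℕ => ((⌊q * x + j * κ⌋ : ℤ) : ℝ))]
    simp
  rcases le_total 0 η with h | h
  · have hbκ : b * κ ≤ 1 := by rwa [abs_of_nonneg h] at hb
    have hΦ : ∀ x, 0 ≤ Φ x ∧ Φ x ≤ 1 := by
      intro x
      constructor
      · apply Finset.sum_nonneg
        intro j _
        have : ∑ s ∈ Finset.range q, ((⌊x + j * η + s * (p : ℝ) / q⌋ : ℤ) : ℝ) ≤
            ∑ s ∈ Finset.range q, ((⌊x + j * η + s * α⌋ : ℤ) : ℝ) := by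
          apply Finset.sum_le_sum
          intro s _
          have : x + j * η + s * (p : ℝ) / q ≤ x + j * η + s * α := by
            rw [hα]
            have : 0 ≤ s / q * η := by positivity
            linarith
          exact_mod_cast Int.floor_le_floor this
        rw [hsum] at this
        linarith
      · calc Φ x ≤ ∑ j ∈ Finset.range b,
              (((⌊q * x + (j + 1 : ℕ) * κ⌋ : ℤ) : ℝ) - ((⌊q * x + j * κ⌋ : ℤ) : ℝ)) := by
              apply Finset.sum_le_sum
              intro j _
              have : ∑ s ∈ Finset.range q, ((⌊x + j * η + s * α⌋ : ℤ) : ℝ) ≤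
                  ∑ s ∈ Finset.range q, ((⌊x + (j + 1 : ℕ) * η + s * (p : ℝ) / q⌋ : ℤ) : ℝ) := by
                apply Finset.sum_le_sum
                intro s hs
                have : x + j * η + s * α ≤ x + (j + 1 : ℕ) * η + s * (p : ℝ) / q := by
                  rw [hα]
                  have h1 : (s : ℝ) / q ≤ 1 := by
                    rw [div_le_one hq']
                    exact_mod_cast (Finset.mem_range.mp hs).le
                  have : s / q * η ≤ 1 * η := mul_le_mul_of_nonneg_right h1 h
                  push_cast
                  linarith
                exact_mod_cast Int.floor_le_floor this
              rw [hsum] at this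
              linarith
          _ = _ := htel x
          _ ≤ 1 := by
              have : ⌊q * x + b * κ⌋ ≤ ⌊q * x⌋ + 1 := by
                rw [← Int.floor_add_one]
                exact Int.floor_le_floor (by linarith)
              have : ⌊q * x + b * κ⌋ - ⌊q * x⌋ ≤ 1 := by linarith
              exact_mod_cast this
    have h1 := hF x
    have h2 := hF y
    linarith [(hΦ x).1, (hΦ y).2]
  · have hbκ : -1 ≤ b * κ := by
      rw [abs_of_nonpos h] at hb
      rw [hκ]; linarith
    have hΦ : ∀ x, -1 ≤ Φ x ∧ Φ x ≤ 0 := by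
      intro x
      constructor
      · calc (-1 : ℝ) ≤ ((⌊q * x + b * κ⌋ - ⌊q * x⌋ : ℤ) : ℝ) := by
              have : ⌊q * x⌋ - 1 ≤ ⌊q * x + b * κ⌋ := by
                rw [← Int.floor_sub_one]
                exact Int.floor_le_floor (by linarith)
              have : -1 ≤ ⌊q * x + b * κ⌋ - ⌊q * x⌋ := by linarith
              exact_mod_cast this
          _ = _ := (htel x).symm
          _ ≤ Φ x := by
              apply Finset.sum_le_sum
              intro j _
              have : ∑ s ∈ Finset.range q, ((⌊x + (j + 1 : ℕ) * η + s * (p : ℝ) / q⌋ : ℤ) : ℝ) ≤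
                  ∑ s ∈ Finset.range q, ((⌊x + j * η + s * α⌋ : ℤ) : ℝ) := by
                apply Finset.sum_le_sum
                intro s hs
                have : x + (j + 1 : ℕ) * η + s * (p : ℝ) / q ≤ x + j * η + s * α := by
                  rw [hα]
                  have h1 : (s : ℝ) / q ≤ 1 := by
                    rw [div_le_one hq']
                    exact_mod_cast (Finset.mem_range.mp hs).le
                  have : 1 * η ≤ s / q * η := mul_le_mul_of_nonpos_right h1 h
                  push_cast
                  linarith
                exact_mod_cast Int.floor_le_floor this
              rw [hsum] at this
              linarith
      · apply Finset.sum_nonpos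
        intro j _
        have : ∑ s ∈ Finset.range q, ((⌊x + j * η + s * α⌋ : ℤ) : ℝ) ≤
            ∑ s ∈ Finset.range q, ((⌊x + j * η + s * (p : ℝ) / q⌋ : ℤ) : ℝ) := by
          apply Finset.sum_le_sum
          intro s _
          have : x + j * η + s * α ≤ x + j * η + s * (p : ℝ) / q := by
            rw [hα]
            have : s / q * η ≤ 0 := mul_nonpos_of_nonneg_of_nonpos (by positivity) h
            linarith
          exact_mod_cast Int.floor_le_floor this
        rw [hsum] at this
        linarith
    have h1 := hF x
    have h2 := hF y
    linarith [(hΦ x).1, (hΦ y).2]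

theorem gaussIter_succ (α : ℝ) (m : ℕ) : gaussIter α (m + 1) = Int.fract (gaussIter α m)⁻¹ := by
  unfold gaussIter
  rw [Function.iterate_succ_apply']
  rfl

theorem gaussIter_props (α : ℝ) (hirr : Irrational α) (h0 : 0 < α) (h1 : α < 1) (m : ℕ) :
    Irrational (gaussIter α m) ∧ 0 < gaussIter α m ∧ gaussIter α m < 1 := by
  induction m with
  | zero => exact ⟨hirr, h0, h1⟩
  | succ m ih =>
    obtain ⟨i1, i2, i3⟩ := ih
    rw [gaussIter_succ]
    have hi : Irrational (Int.fract (gaussIter α m)⁻¹) := by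
      unfold Int.fract
      exact (irrational_inv_iff.mpr i1).sub_intCast _
    refine ⟨hi, lt_of_le_of_ne (Int.fract_nonneg _) ?_, Int.fract_lt_one _⟩
    exact hi.ne_zero.symm

theorem pq_spec (α : ℝ) (hirr : Irrational α) (h0 : 0 < α) (h1 : α < 1) (m : ℕ) :
    1 ≤ pq α (m + 1) ∧ (gaussIter α m)⁻¹ = pq α (m + 1) + gaussIter α (m + 1) := by
  obtain ⟨i1, i2, i3⟩ := gaussIter_props α hirr h0 h1 m
  have hinv : 1 ≤ (gaussIter α m)⁻¹ := (one_le_inv₀ i2).mpr i3.le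
  have e : pq α (m + 1) = ⌊(gaussIter α m)⁻¹⌋₊ := by simp [pq]
  constructor
  · rw [e]; exact Nat.le_floor (by simpa using hinv)
  · rw [e, gaussIter_succ, natCast_floor_eq_intCast_floor (by linarith)]
    exact (Int.floor_add_fract _).symm

theorem eta_rec (α : ℝ) (hirr : Irrational α) (h0 : 0 < α) (h1 : α < 1) (m : ℕ) :
    (qden α (m + 1) : ℝ) * α - pnum α (m + 1) =
      - gaussIter α (m + 1) * ((qden α m : ℝ) * α - pnum α m) := by
  induction m with
  | zero =>
    have h := (pq_spec α hirr h0 h1 0).2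
    have e : gaussIter α 0 = α := rfl
    rw [e] at h
    simp only [zero_add] at h ⊢
    simp only [qden, pnum]
    have : gaussIter α 1 = α⁻¹ - pq α 1 := by linarith
    rw [this]
    push_cast
    field_simp
    ring
  | succ m ih =>
    have h := (pq_spec α hirr h0 h1 (m + 1)).2
    obtain ⟨-, i2, -⟩ := gaussIter_props α hirr h0 h1 (m + 1)
    have h3 : (qden α m : ℝ) * α - pnum α m =
        - (gaussIter α (m + 1))⁻¹ * ((qden α (m + 1) : ℝ) * α - pnum α (m + 1)) := by
      rw [ih]; field_simp
    have : gaussIter α (m + 1 + 1) = (gaussIter α (m + 1))⁻¹ - pq α (m + 1 + 1) := by linarith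
    rw [this]
    have e1 : qden α (m + 1 + 1) = pq α (m + 2) * qden α (m + 1) + qden α m := rfl
    have e2 : pnum α (m + 1 + 1) = pq α (m + 2) * pnum α (m + 1) + pnum α m := rfl
    rw [e1, e2]
    push_cast
    linarith

theorem det_rec (α : ℝ) (m : ℕ) :
    (qden α m : ℤ) * pnum α (m + 1) - qden α (m + 1) * pnum α m = (-1) ^ m := by
  induction m with
  | zero => simp [qden, pnum]
  | succ m ih =>
    have e1 : qden α (m + 1 + 1) = pq α (m + 2) * qden α (m + 1) + qden α m := rfl
    have e2 : pnum α (m + 1 + 1) = pq α (m + 2) * pnum α (m + 1) + pnum α m := rfl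
    rw [e1, e2, pow_succ, ← ih]
    push_cast
    ring

theorem pq_coprime (α : ℝ) (m : ℕ) : Nat.Coprime (pnum α m) (qden α m) := by
  rw [← Nat.isCoprime_iff_coprime]
  have h := det_rec α m
  refine ⟨-(-1) ^ m * qden α (m + 1), (-1) ^ m * pnum α (m + 1), ?_⟩
  have h2 : ((-1 : ℤ) ^ m) * (-1) ^ m = 1 := by rw [← mul_pow]; simp
  linear_combination (-1) ^ m * h + h2

theorem qden_props (α : ℝ) (hirr : Irrational α) (h0 : 0 < α) (h1 : α < 1) (m : ℕ) :
    1 ≤ qden α m ∧ qden α m ≤ qden α (m + 1) := by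
  induction m with
  | zero => exact ⟨le_rfl, (pq_spec α hirr h0 h1 0).1⟩
  | succ m ih =>
    refine ⟨ih.1.trans ih.2, ?_⟩
    have e1 : qden α (m + 1 + 1) = pq α (m + 2) * qden α (m + 1) + qden α m := rfl
    rw [e1]
    have := (pq_spec α hirr h0 h1 (m + 1)).1
    nlinarith

theorem kappa_bounds (α : ℝ) (hirr : Irrational α) (h0 : 0 < α) (h1 : α < 1) (m : ℕ) :
    0 < (qden α (m + 1) : ℝ) * |qden α (m + 1) * α - pnum α (m + 1)| ∧
    (pq α (m + 2) : ℝ) * ((qden α (m + 1) : ℝ) * |qden α (m + 1) * α - pnum α (m + 1)|) ≤ 1 ∧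
    1 ≤ ((pq α (m + 2) : ℝ) + 2) *
      ((qden α (m + 1) : ℝ) * |qden α (m + 1) * α - pnum α (m + 1)|) := by
  have hq0 := qden_props α hirr h0 h1 m
  have hq1 := (qden_props α hirr h0 h1 (m + 1)).1
  have hd := det_rec α (m + 1)
  have he := eta_rec α hirr h0 h1 (m + 1)
  obtain ⟨-, g1, g2⟩ := gaussIter_props α hirr h0 h1 (m + 2)
  have e1 : qden α (m + 1 + 1) = pq α (m + 2) * qden α (m + 1) + qden α m := rfl
  have hdr : (qden α (m + 1) : ℝ) * pnum α (m + 1 + 1) - qden α (m + 1 + 1) * pnum α (m + 1)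
      = (-1) ^ (m + 1) := by exact_mod_cast hd
  set Q : ℝ := (qden α (m + 1) : ℝ) with hQ
  set η : ℝ := Q * α - pnum α (m + 1) with hη
  have e1r : (qden α (m + 1 + 1) : ℝ) = pq α (m + 2) * Q + qden α m := by rw [e1]; push_cast; rfl
  have hQ1 : (1 : ℝ) ≤ Q := by rw [hQ]; exact_mod_cast hq1
  have hQ0 : (qden α m : ℝ) ≤ Q := by rw [hQ]; exact_mod_cast hq0.2
  have hQ00 : (1 : ℝ) ≤ qden α m := by exact_mod_cast hq0.1
  have ha : (0 : ℝ) ≤ pq α (m + 2) := by positivity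
  have key : η * (pq α (m + 2) * Q + qden α m + Q * gaussIter α (m + 2)) = (-1) ^ (m + 1) := by
    rw [← e1r, ← hdr]
    have he' : (qden α (m + 1 + 1) : ℝ) * α - pnum α (m + 1 + 1) = - gaussIter α (m + 2) * η := he
    have : (pnum α (m + 1 + 1) : ℝ) = qden α (m + 1 + 1) * α + gaussIter α (m + 2) * η := by linarith
    rw [this, hη]
    ring
  have hg : 0 < Q * gaussIter α (m + 2) := by positivity
  have hg2 : Q * gaussIter α (m + 2) ≤ Q := by nlinarith
  have hD : 0 < (pq α (m + 2) * Q + qden α m + Q * gaussIter α (m + 2)) := by positivity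
  have key2 : |η| * (pq α (m + 2) * Q + qden α m + Q * gaussIter α (m + 2)) = 1 := by
    have := congrArg abs key
    rwa [abs_mul, abs_of_pos hD, abs_pow, abs_neg, abs_one, one_pow] at this
  have hη0 : 0 < |η| := by
    by_contra hcon
    have : |η| = 0 := le_antisymm (not_lt.mp hcon) (abs_nonneg _)
    rw [this] at key2
    simp at key2
  refine ⟨by positivity, ?_, ?_⟩
  · rw [← key2]; nlinarith
  · rw [← key2]; nlinarith

theorem level_osc (α : ℝ) (hirr : Irrational α) (h0 : 0 < α) (h1 : α < 1) (m b : ℕ)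
    (hb : b ≤ pq α (m + 2)) (x y : ℝ) :
    Fsum α (b * qden α (m + 1)) x - Fsum α (b * qden α (m + 1)) y ≤
      25 / 12 + (pq α (m + 2) : ℝ) / 4 := by
  rcases Nat.eq_zero_or_pos b with rfl | hb1
  · simp [Fsum]; positivity
  obtain ⟨k0, k1, k2⟩ := kappa_bounds α hirr h0 h1 m
  have ha1 : (1 : ℝ) ≤ pq α (m + 2) := by exact_mod_cast (pq_spec α hirr h0 h1 (m + 1)).1
  have hbr : (b : ℝ) ≤ pq α (m + 2) := by exact_mod_cast hb
  have hb1r : (1 : ℝ) ≤ b := by exact_mod_cast hb1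
  set q := qden α (m + 1)
  set p := pnum α (m + 1)
  set a : ℝ := (pq α (m + 2) : ℝ)
  set κ := (q : ℝ) * |q * α - p| with hκ
  have hbκ : b * κ ≤ 1 := le_trans (mul_le_mul_of_nonneg_right hbr k0.le) k1
  have hF := Fsum_block α p q (qden_props α hirr h0 h1 (m + 1)).1 (pq_coprime α (m + 1)) b hbκ x y
  have hosc : ∀ z z', Wsum κ b z - Wsum κ b z' ≤ 13 / 12 + a / 4 := by
    intro z z'
    refine (Wsum_osc κ k0 b hb1 (by nlinarith) z z').trans ?_
    have hmin : min 0 (1 / κ - b) = 0 := by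
      apply min_eq_left
      rw [sub_nonneg, le_div_iff₀ k0]; exact hbκ
    rw [hmin, sub_zero]
    apply max_le (by linarith)
    have hk : 1 / (a + 2) ≤ κ := by rw [div_le_iff₀ (by linarith)]; linarith
    have hmono : b * (1 - κ * (b - 1)) ≤ b * (1 - 1 / (a + 2) * (b - 1)) := by
      apply mul_le_mul_of_nonneg_left _ (by linarith)
      have := mul_le_mul_of_nonneg_right hk (by linarith : (0 : ℝ) ≤ b - 1)
      linarith
    refine hmono.trans ?_
    have e : b * (1 - 1 / (a + 2) * (b - 1)) = b * (a + 3 - b) / (a + 2) := by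
      field_simp; ring
    rw [e, div_le_iff₀ (by linarith)]
    nlinarith [sq_nonneg (2 * (b : ℝ) - (a + 3))]
  have hosc' : Wsum (q * (q * α - p)) b (q * x) - Wsum (q * (q * α - p)) b (q * y) ≤ 13 / 12 + a / 4 := by
    rcases le_total 0 ((q : ℝ) * α - p) with h | h
    · have : (q : ℝ) * (q * α - p) = κ := by rw [hκ, abs_of_nonneg h]
      rw [this]; exact hosc _ _
    · have : (q : ℝ) * (q * α - p) = -κ := by rw [hκ, abs_of_nonpos h]; ring
      rw [this]; exact Wsum_osc_neg κ b _ hosc _ _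
  linarith

theorem alpha_bounds (α : ℝ) (hirr : Irrational α) (h0 : 0 < α) (h1 : α < 1) :
    (1 : ℝ) ≤ pq α 1 ∧ (pq α 1 : ℝ) * α < 1 ∧ 1 < ((pq α 1 : ℝ) + 1) * α := by
  have h := pq_spec α hirr h0 h1 0
  obtain ⟨-, g1, g2⟩ := gaussIter_props α hirr h0 h1 1
  have e : gaussIter α 0 = α := rfl
  rw [e] at h
  have h2 := h.2
  simp only [zero_add] at h2
  have h3 : 1 = (pq α 1 + gaussIter α 1) * α := by rw [← h2]; field_simp
  refine ⟨by exact_mod_cast h.1, ?_, ?_⟩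
  · nlinarith
  · nlinarith

/-- bounds of the extremal quantities at level `0`. -/
theorem base_bounds (α : ℝ) (hirr : Irrational α) (h0 : 0 < α) (h1 : α < 1) (c : ℕ)
    (hc : c ≤ pq α 1) :
    (((c + 1 : ℕ) : ℝ) - 1) * α < 1 ∧
    -1 ≤ min 0 (1 / α - ((c + 1 : ℕ) : ℝ)) ∧
    max 1 (((c + 1 : ℕ) : ℝ) * (1 - α * (((c + 1 : ℕ) : ℝ) - 1))) ≤ 1 + (pq α 1 : ℝ) / 4 ∧
    max 1 (((c + 1 : ℕ) : ℝ) * (1 - α * (((c + 1 : ℕ) : ℝ) - 1))) -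
      min 0 (1 / α - ((c + 1 : ℕ) : ℝ)) ≤ 23 / 12 + (pq α 1 : ℝ) / 4 := by
  obtain ⟨a1, a2, a3⟩ := alpha_bounds α hirr h0 h1
  have hcr : (c : ℝ) ≤ pq α 1 := by exact_mod_cast hc
  have hc0 : (0 : ℝ) ≤ c := by positivity
  have hinv : (pq α 1 : ℝ) ≤ 1 / α := by rw [le_div_iff₀ h0]; exact a2.le
  have hlow : -1 ≤ min 0 (1 / α - ((c + 1 : ℕ) : ℝ)) := by
    apply le_min (by norm_num)
    push_cast; linarith
  have hmax : ((c + 1 : ℕ) : ℝ) * (1 - α * (((c + 1 : ℕ) : ℝ) - 1)) ≤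
      (c + 1) * (pq α 1 + 1 - c) / (pq α 1 + 1) := by
    set a : ℝ := (pq α 1 : ℝ)
    have e : (c + 1) * (a + 1 - c) / (a + 1) = (c + 1) * (1 - 1 / (a + 1) * c) := by
      field_simp
    rw [e]
    push_cast
    apply mul_le_mul_of_nonneg_left _ (by linarith)
    have : 1 / (a + 1) ≤ α := by rw [div_le_iff₀ (by linarith)]; linarith
    have := mul_le_mul_of_nonneg_right this hc0
    linarith
  have hquad : (c + 1 : ℝ) * (pq α 1 + 1 - c) / (pq α 1 + 1) ≤ 7 / 8 + (pq α 1 : ℝ) / 4 := by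
    rw [div_le_iff₀ (by linarith)]
    nlinarith [sq_nonneg (2 * (c : ℝ) - pq α 1)]
  refine ⟨?_, hlow, ?_, ?_⟩
  · push_cast; nlinarith
  · apply max_le <;> linarith
  · rcases Nat.lt_or_ge c (pq α 1) with h | h
    · have hcr' : (c : ℝ) + 1 ≤ pq α 1 := by exact_mod_cast h
      have : min 0 (1 / α - ((c + 1 : ℕ) : ℝ)) = 0 := by
        apply min_eq_left
        push_cast; linarith
      rw [this, sub_zero]
      apply max_le <;> linarith
    · have hce : (c : ℝ) = pq α 1 := by exact_mod_cast le_antisymm hc h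
      have h5 : (c + 1 : ℝ) * (pq α 1 + 1 - c) / (pq α 1 + 1) = 1 := by
        rw [hce]; field_simp; ring
      have : max 1 (((c + 1 : ℕ) : ℝ) * (1 - α * (((c + 1 : ℕ) : ℝ) - 1))) ≤ 1 := by
        apply max_le le_rfl; linarith
      linarith

theorem Fsum_add (α : ℝ) (m k : ℕ) (x : ℝ) :
    Fsum α (m + k) x = Fsum α m x + Fsum α k (x + m * α) := by
  unfold Fsum
  rw [Finset.sum_range_add]
  congr 1
  apply Finset.sum_congr rfl
  intro j _
  congr 1
  push_cast; ring

theorem total_osc (α : ℝ) (hirr : Irrational α) (h0 : 0 < α) (h1 : α < 1) (c : ℕ → ℕ)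
    (hc : ∀ h, c h ≤ pq α (h + 1)) (N : ℕ) (x y : ℝ) :
    Fsum α ((∑ h ∈ Finset.range (N + 1), c h * qden α h) + 1) x -
      Fsum α ((∑ h ∈ Finset.range (N + 1), c h * qden α h) + 1) y ≤
      23 / 12 + 25 / 12 * N + (1 / 4) * ∑ m ∈ Finset.Icc 1 (N + 1), (pq α m : ℝ) := by
  induction N generalizing x y with
  | zero =>
    have e : (∑ h ∈ Finset.range (0 + 1), c h * qden α h) + 1 = c 0 + 1 := by simp [qden]
    rw [e]
    obtain ⟨b1, -, -, b4⟩ := base_bounds α hirr h0 h1 (c 0) (hc 0)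
    have := (Wsum_osc α h0 (c 0 + 1) (by omega) b1 x y).trans b4
    simp only [Wsum] at this
    simp only [Fsum]
    simp
    linarith
  | succ N ih =>
    have e : (∑ h ∈ Finset.range (N + 1 + 1), c h * qden α h) + 1 =
        ((∑ h ∈ Finset.range (N + 1), c h * qden α h) + 1) + c (N + 1) * qden α (N + 1) := by
      rw [Finset.sum_range_succ]; ring
    rw [e, Finset.sum_Icc_succ_top (by omega)]
    have i1 := ih x y
    generalize (∑ h ∈ Finset.range (N + 1), c h * qden α h) + 1 = M at i1 ⊢
    rw [Fsum_add α M _ x, Fsum_add α M _ y]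
    have i2 := level_osc α hirr h0 h1 N (c (N + 1)) (hc (N + 1)) (x + M * α) (y + M * α)
    push_cast
    have e2 : pq α (N + 2) = pq α (N + 1 + 1) := rfl
    rw [e2] at i2
    linarith

theorem ddisc_eq (α β : ℝ) (hβ0 : 0 < β) (hβ1 : β < 1) (n : ℕ) :
    ddisc α β n = Fsum α n (-β) - Fsum α n 0 := by
  unfold ddisc Fsum
  have : β * n = ∑ r ∈ Finset.range n, β := by simp; ring
  rw [this, ← Finset.sum_sub_distrib, ← Finset.sum_sub_distrib]
  apply Finset.sum_congr rfl
  intro r _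
  have f0 := Int.fract_nonneg ((r : ℝ) * α)
  have f1 := Int.fract_lt_one ((r : ℝ) * α)
  have f2 := Int.floor_add_fract ((r : ℝ) * α)
  rw [zero_add]
  split_ifs with h
  · have : Int.fract (-β + r * α) = Int.fract ((r : ℝ) * α) - β + 1 := by
      rw [Int.fract_eq_iff]
      exact ⟨by linarith, by linarith, ⌊(r : ℝ) * α⌋ - 1, by push_cast; linarith⟩
    rw [this]; ring
  · have : Int.fract (-β + r * α) = Int.fract ((r : ℝ) * α) - β := by
      rw [Int.fract_eq_iff]
      exact ⟨by linarith, by linarith, ⌊(r : ℝ) * α⌋, by linarith⟩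
    rw [this]; ring

theorem ddisc_bound (α : ℝ) (hirr : Irrational α) (h0 : 0 < α) (h1 : α < 1) (c : ℕ → ℕ)
    (hc : ∀ h, c h ≤ pq α (h + 1)) (N : ℕ) (β : ℝ) (hβ0 : 0 < β) (hβ1 : β < 1) :
    |ddisc α β ((∑ h ∈ Finset.range (N + 1), c h * qden α h) + 1)| ≤
      1 + 3 * N + (1 / 4) * ∑ m ∈ Finset.Icc 1 (N + 1), (pq α m : ℝ) := by
  rw [ddisc_eq α β hβ0 hβ1]
  rcases Nat.eq_zero_or_pos N with rfl | hN
  · have e : (∑ h ∈ Finset.range (0 + 1), c h * qden α h) + 1 = c 0 + 1 := by simp [qden]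
    rw [e]
    obtain ⟨b1, b2, b3, -⟩ := base_bounds α hirr h0 h1 (c 0) (hc 0)
    have hz : Fsum α (c 0 + 1) 0 = ∑ j ∈ Finset.range (c 0 + 1), (j : ℝ) * α := by
      unfold Fsum
      apply Finset.sum_congr rfl
      intro j hj
      rw [zero_add, Int.fract_eq_self]
      refine ⟨by positivity, lt_of_le_of_lt ?_ b1⟩
      apply mul_le_mul_of_nonneg_right _ h0.le
      have : j ≤ c 0 := Nat.lt_succ_iff.mp (Finset.mem_range.mp hj)
      push_cast
      have : (j : ℝ) ≤ c 0 := by exact_mod_cast this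
      linarith
    have hw := Wsum_bounds α h0 (c 0 + 1) (by omega) b1 β hβ0 hβ1.le
    have e2 : Wsum α (c 0 + 1) (-β) = Fsum α (c 0 + 1) (-β) := rfl
    rw [e2, ← hz] at hw
    have hp : (0 : ℝ) ≤ pq α 1 := by positivity
    simp
    rw [abs_le]
    constructor <;> linarith [hw.1, hw.2]
  · have hN' : (1 : ℝ) ≤ N := by exact_mod_cast hN
    have t1 := total_osc α hirr h0 h1 c hc N (-β) 0
    have t2 := total_osc α hirr h0 h1 c hc N 0 (-β)
    rw [abs_le]
    constructor <;> linarith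

/-- for every `n ≥ 2`, with `N = ord(n-1)`,
`n D_n^*(α) = sup_{β ∈ (0,1)} |d_n(α,β)| ≤ 1 + 3N + (1/4) ∑_{m=1}^{N+1} a_m`. -/
theorem discrepancy_upper (α : ℝ) (hirr : Irrational α) (h0 : 0 < α) (h1 : α < 1)
    (n : ℕ) (hn : 2 ≤ n) (N : ℕ) (c : ℕ → ℕ) (hOst : IsOstrowski α (n - 1) N c) :
    (n : ℝ) * Dstar α n = nDsup α n ∧
    nDsup α n ≤ 1 + 3 * (N : ℝ) + (1 / 4) * ∑ m ∈ Finset.Icc 1 (N + 1), (pq α m : ℝ) := by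
  obtain ⟨hn1, hc, -, -, -⟩ := hOst
  constructor
  · unfold Dstar nDsup
    rw [sSup_image', sSup_image', Real.mul_iSup_of_nonneg (by positivity)]
    congr 1
    funext β
    have : (n : ℝ) ≠ 0 := by positivity
    field_simp
  · have e : n = (∑ h ∈ Finset.range (N + 1), c h * qden α h) + 1 := by omega
    unfold nDsup
    apply csSup_le
    · exact Set.Nonempty.image _ ⟨1 / 2, by norm_num, by norm_num⟩
    · rintro _ ⟨β, ⟨hβ0, hβ1⟩, rfl⟩
      have := ddisc_bound α hirr h0 h1 c hc N β hβ0 hβ1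
      rw [← e] at this
      exact this
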